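/- (Normal rank of the Popov function.) Let X be a symmetric solution of CGCARE(Σ), and for s ∈ ℂ with s I_n − A invertible set T_X(s) = I_m + R† S_Xᵀ (s I_n − A)⁻¹ B. Then for every s ∈ ℂ such that s I_n − A, −s I_n − Aᵀ, T_X(s) and T_X(−s) are all invertible, the Popov function Φ(s) = Bᵀ(−s I_n − Aᵀ)⁻¹ Q (s I_n − A)⁻¹ B + Bᵀ(−s I_n − Aᵀ)⁻¹ S + Sᵀ (s I_n − A)⁻¹ B + R satisfies rank Φ(s) = rank R. -/

import Mathlib

/-!
Write `W = S + X B`. Since `R` is symmetric, the Penrose equations force `R R† = R† R`, and the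
kernel condition says `W R† R = W`, hence `R R† Wᵀ = Wᵀ`. The Riccati equation rewrites as
`Q = W R† Wᵀ + X (s I - A) + (-s I - Aᵀ) X`, so the `X`-terms of the Popov function cancel and
`Φ(s) = T_X(-s)ᵀ R T_X(s)` (`popov_factorization`). Both outer factors are invertible, so the rank
is that of `R`.
-/

open Matrix

/-- Entrywise embedding of a real matrix into the complex matrices. -/
def cm {α β : Type*} (M : Matrix α β ℝ) : Matrix α β ℂ := M.map Complex.ofReal

/-- A generalized inverse satisfying the symmetry conditions commutes with a symmetric matrix: both
products equal `R† R R R†`. -/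
lemma pinv_commute {m : ℕ} (R Rd : Matrix (Fin m) (Fin m) ℝ) (hR : Rᵀ = R)
    (hRd1 : R * Rd * R = R)
    (hRd3 : (R * Rd)ᵀ = R * Rd) (hRd4 : (Rd * R)ᵀ = Rd * R) : R * Rd = Rd * R := by
  rw [transpose_mul, hR] at hRd3 hRd4
  have h : R * Rdᵀ * R = R := by
    have := congrArg transpose hRd1
    simpa [transpose_mul, hR, Matrix.mul_assoc] using this
  calc R * Rd = (R * Rdᵀ * R) * Rd := by rw [h]
    _ = (Rd * R) * (R * Rd) := by rw [hRd4]; simp only [Matrix.mul_assoc]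
    _ = Rd * (R * Rdᵀ * R) := by rw [← hRd3]; simp only [Matrix.mul_assoc]
    _ = Rd * R := by rw [h]

/-- The spectral factorization of the Popov function, with `G` and `H` standing for
`(s I - A)⁻¹` and `(-s I - Aᵀ)⁻¹`. -/
lemma popov_factorization {n m : ℕ} (P N Q X G H : Matrix (Fin n) (Fin n) ℂ)
    (B S W : Matrix (Fin n) (Fin m) ℂ) (R Rd : Matrix (Fin m) (Fin m) ℂ)
    (hPG : P * G = 1) (hHN : H * N = 1) (hX : Xᵀ = X) (hW : S = W - X * B)
    (hQ : Q = W * Rd * Wᵀ + X * P + N * X)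
    (hRW : R * Rd * Wᵀ = Wᵀ) (hWR : W * Rdᵀ * R = W) :
    Bᵀ * H * Q * G * B + Bᵀ * H * S + Sᵀ * G * B + R
      = (1 + Bᵀ * H * W * Rdᵀ) * R * (1 + Rd * Wᵀ * G * B) := by
  have e1 : Bᵀ * H * (X * P) * G * B = Bᵀ * H * X * B := by
    calc _ = Bᵀ * H * X * (P * G) * B := by simp only [Matrix.mul_assoc]
      _ = _ := by rw [hPG, Matrix.mul_one]
  have e2 : Bᵀ * H * (N * X) * G * B = Bᵀ * X * G * B := by
    calc _ = Bᵀ * (H * N) * X * G * B := by simp only [Matrix.mul_assoc]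
      _ = _ := by rw [hHN, Matrix.mul_one]
  have e3 : (1 + Bᵀ * H * W * Rdᵀ) * R = R + Bᵀ * H * W := by
    calc _ = R + Bᵀ * H * (W * Rdᵀ * R) := by
          simp only [Matrix.mul_assoc, Matrix.add_mul, Matrix.one_mul]
      _ = _ := by rw [hWR]
  have e4 : R * (Rd * Wᵀ * G * B) = Wᵀ * G * B := by
    calc _ = (R * Rd * Wᵀ) * G * B := by simp only [Matrix.mul_assoc]
      _ = _ := by rw [hRW]
  have e5 : Sᵀ = Wᵀ - Bᵀ * X := by rw [hW, transpose_sub, transpose_mul, hX]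
  rw [e3, Matrix.mul_add, Matrix.mul_one, Matrix.add_mul, e4, e5, hQ, hW]
  simp only [Matrix.mul_add, Matrix.add_mul, Matrix.mul_sub, Matrix.sub_mul, e1, e2]
  simp only [Matrix.mul_assoc]
  abel

lemma cm_mul {n m k : ℕ} (M : Matrix (Fin n) (Fin m) ℝ) (N : Matrix (Fin m) (Fin k) ℝ) :
    cm (M * N) = cm M * cm N :=
  Matrix.map_mul (f := Complex.ofRealHom)

lemma cm_add {n m : ℕ} (M N : Matrix (Fin n) (Fin m) ℝ) : cm (M + N) = cm M + cm N := by
  ext; simp [cm]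

lemma cm_sub {n m : ℕ} (M N : Matrix (Fin n) (Fin m) ℝ) : cm (M - N) = cm M - cm N := by
  ext; simp [cm]

lemma cm_transpose {n m : ℕ} (M : Matrix (Fin n) (Fin m) ℝ) : cm Mᵀ = (cm M)ᵀ := rfl

theorem stmt_6 (n m : ℕ) (hn : 0 < n) (hm : 0 < m)
    (A Q : Matrix (Fin n) (Fin n) ℝ) (B S : Matrix (Fin n) (Fin m) ℝ)
    (R : Matrix (Fin m) (Fin m) ℝ)
    (hPi : (Matrix.fromBlocks Q S Sᵀ R).PosSemidef)
    (Rd : Matrix (Fin m) (Fin m) ℝ)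
    (hRd1 : R * Rd * R = R) (hRd2 : Rd * R * Rd = Rd)
    (hRd3 : (R * Rd)ᵀ = R * Rd) (hRd4 : (Rd * R)ᵀ = Rd * R)
    (X : Matrix (Fin n) (Fin n) ℝ) (hX : Xᵀ = X)
    (hgcare : X * A + Aᵀ * X - (S + X * B) * Rd * (S + X * B)ᵀ + Q = 0)
    (hker : ∀ v : Fin m → ℝ, R.mulVec v = 0 → (S + X * B).mulVec v = 0)
    (s : ℂ)
    (h1 : IsUnit (s • (1 : Matrix (Fin n) (Fin n) ℂ) - cm A).det)
    (h2 : IsUnit ((-s) • (1 : Matrix (Fin n) (Fin n) ℂ) - (cm A)ᵀ).det)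
    (h3 : IsUnit ((1 : Matrix (Fin m) (Fin m) ℂ) + cm Rd * (cm (S + X * B))ᵀ *
        (s • (1 : Matrix (Fin n) (Fin n) ℂ) - cm A)⁻¹ * cm B).det)
    (h4 : IsUnit ((1 : Matrix (Fin m) (Fin m) ℂ) + cm Rd * (cm (S + X * B))ᵀ *
        ((-s) • (1 : Matrix (Fin n) (Fin n) ℂ) - cm A)⁻¹ * cm B).det) :
    ((cm B)ᵀ * ((-s) • (1 : Matrix (Fin n) (Fin n) ℂ) - (cm A)ᵀ)⁻¹ *
        cm Q * (s • (1 : Matrix (Fin n) (Fin n) ℂ) - cm A)⁻¹ * cm B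
      + (cm B)ᵀ * ((-s) • (1 : Matrix (Fin n) (Fin n) ℂ) - (cm A)ᵀ)⁻¹ * cm S
      + (cm S)ᵀ * (s • (1 : Matrix (Fin n) (Fin n) ℂ) - cm A)⁻¹ * cm B
      + cm R).rank = (cm R).rank := by
  have hR : Rᵀ = R := by
    have h := hPi.isHermitian
    rw [Matrix.isHermitian_fromBlocks_iff] at h
    exact (Matrix.conjTranspose_eq_transpose_of_trivial R).symm.trans h.2.2.2
  have hcomm := pinv_commute R Rd hR hRd1 hRd3 hRd4
  -- The columns of `1 - R† R` lie in the kernel of `R`.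
  have hW : (S + X * B) * (Rd * R) = S + X * B := by
    have h0 : (S + X * B) * (1 - Rd * R) = 0 := by
      ext i j
      have hk : R.mulVec ((1 - Rd * R).col j) = 0 := by
        have : R * (1 - Rd * R) = 0 := by
          rw [Matrix.mul_sub, ← Matrix.mul_assoc, hRd1, Matrix.mul_one, sub_self]
        ext k
        exact congrFun (congrFun this k) j
      exact congrFun (hker _ hk) i
    rw [Matrix.mul_sub, Matrix.mul_one, sub_eq_zero] at h0
    exact h0.symm
  have hSW : S = (S + X * B) - X * B := by abel
  generalize S + X * B = W at *
  have hRW : R * Rd * Wᵀ = Wᵀ := by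
    rw [hcomm, ← hRd4, ← transpose_mul, hW]
  have hWR : W * Rdᵀ * R = W := by
    have := congrArg transpose hRW
    simpa [transpose_mul, hR, Matrix.mul_assoc] using this
  have hQ : Q = W * Rd * Wᵀ - X * A - Aᵀ * X := by
    rw [← sub_eq_zero, ← hgcare]; abel
  have hfac := popov_factorization (s • 1 - cm A) ((-s) • 1 - (cm A)ᵀ) (cm Q) (cm X)
    (s • 1 - cm A)⁻¹ ((-s) • 1 - (cm A)ᵀ)⁻¹ (cm B) (cm S) (cm W) (cm R) (cm Rd)
    (Matrix.mul_nonsing_inv _ h1) (Matrix.nonsing_inv_mul _ h2)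
    (by rw [← cm_transpose, hX]) (by rw [← cm_mul, ← cm_sub, ← hSW])
    (by
      rw [hQ]
      simp only [cm_sub, cm_mul, cm_transpose, Matrix.mul_sub, Matrix.sub_mul, Matrix.mul_smul,
        Matrix.smul_mul, Matrix.mul_one, Matrix.one_mul, neg_smul,
        Matrix.neg_mul]
      abel)
    (by rw [← cm_transpose, ← cm_mul, ← cm_mul, hRW])
    (by rw [← cm_transpose, ← cm_mul, ← cm_mul, hWR])
  have hT : 1 + (cm B)ᵀ * ((-s) • (1 : Matrix (Fin n) (Fin n) ℂ) - (cm A)ᵀ)⁻¹ * cm W * (cm Rd)ᵀ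
      = (1 + cm Rd * (cm W)ᵀ * ((-s) • (1 : Matrix (Fin n) (Fin n) ℂ) - cm A)⁻¹ * cm B)ᵀ := by
    simp [transpose_mul, Matrix.transpose_nonsing_inv, Matrix.mul_assoc]
  rw [hfac, hT, Matrix.rank_mul_eq_left_of_isUnit_det _ _ h3,
    Matrix.rank_mul_eq_right_of_isUnit_det _ _ (by rwa [Matrix.det_transpose])]
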